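/- Let K > 0 and N ∈ [13,∞). Then λ[h_{K,N,D_{K,N}/2}] < λ[h_{K,N,D_{K,N}}]. In particular, for K > 0 the map (0, D_{K,N}] ∋ D ↦ λ[h_{K,N,D}] is not non-increasing. -/

import Mathlib

open MeasureTheory Filter

/-- The function `s_κ` from the paper. -/
noncomputable def sKappa (κ θ : ℝ) : ℝ :=
  if 0 < κ then Real.sin (Real.sqrt κ * θ) / Real.sqrt κ
  else if κ < 0 then Real.sinh (Real.sqrt (-κ) * θ) / Real.sqrt (-κ)
  else θ

/-- The support of the measure `h · 𝓛¹`. -/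
noncomputable def measSupport (h : ℝ → ℝ) : Set ℝ :=
  {x : ℝ | ∀ ε > 0,
    0 < (MeasureTheory.volume.withDensity (fun y => ENNReal.ofReal (h y))) (Metric.ball x ε)}

/-- A one-dimensional `MCP(K,N)` density. -/
def IsMCPDensity (K N : ℝ) (h : ℝ → ℝ) : Prop :=
  (∀ x, 0 ≤ h x) ∧ MeasureTheory.LocallyIntegrable h MeasureTheory.volume ∧
  ∀ x₀ ∈ measSupport h, ∀ x₁ ∈ measSupport h,
    (0 < K → x₀ ≠ x₁ → |x₁ - x₀| < Real.pi / Real.sqrt (K / (N - 1))) ∧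
    ∀ t ∈ Set.Icc (0:ℝ) 1,
      (sKappa (K / (N - 1)) ((1 - t) * |x₁ - x₀|) / sKappa (K / (N - 1)) |x₁ - x₀|) ^ (N - 1)
          * h x₀
        ≤ h (t * x₁ + (1 - t) * x₀)

/-- The model density `h_{K,N,D}`. -/
noncomputable def modelDensity (K N D : ℝ) (x : ℝ) : ℝ :=
  if x ∈ Set.Icc 0 (D / 2) then sKappa (K / (N - 1)) (D - x) ^ (N - 1)
  else if x ∈ Set.Icc (D / 2) D then sKappa (K / (N - 1)) x ^ (N - 1)
  else 0

/-- Locally Lipschitz functions on a subset `I` of the reals. -/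
def LocLipschitzOn (f : ℝ → ℝ) (I : Set ℝ) : Prop :=
  ∀ x ∈ I, ∃ ε > 0, ∃ C : NNReal, LipschitzOnWith C f (I ∩ Metric.ball x ε)

/-- The local Lipschitz slope `|∇f|(x)` relative to `I`. -/
noncomputable def slopeOn (f : ℝ → ℝ) (I : Set ℝ) (x : ℝ) : ℝ :=
  Filter.limsup (fun y => |f y - f x| / |y - x|) (nhdsWithin x (I \ {x}))

/-- The Poincaré constant `λ[h, I]` of the density `h` on `I`. -/
noncomputable def poincareConst (h : ℝ → ℝ) (I : Set ℝ) : ℝ :=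
  sInf { r : ℝ | ∃ f : ℝ → ℝ, LocLipschitzOn f I ∧
    (∫ x in I, f x * h x) = 0 ∧
    (0 < ∫ x in I, (f x) ^ 2 * h x) ∧
    MeasureTheory.IntegrableOn (fun x => (f x) ^ 2 * h x) I ∧
    r = (∫ x in I, (slopeOn f I x) ^ 2 * h x) / (∫ x in I, (f x) ^ 2 * h x) }

/-! Write `k ^ 2 = K / (N - 1)` and `n = N - 1`. On the maximal interval `[0, π / k]` the function
`cos (k x)` is an eigenfunction of the weight `(sin (k x) / k) ^ n` with eigenvalue
`k ^ 2 (n + 1) = k ^ 2 N`, and it has constant sign on each half. Picone's inequality on the two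
halves, applied to a test function minus its value at the midpoint, bounds the Poincaré constant
below by `k ^ 2 N`.

On the interval of half that length the test function is the odd reflection about the midpoint of
`-cos (2 k x) / sin (k x)`. For `n = 2` this is an exact eigenfunction, again with eigenvalue
`k ^ 2 (n + 1)`, and its defect as a subsolution is proportional to `n - 2`; so its Rayleigh
quotient is less than `k ^ 2 N` as soon as `N > 3`. -/

open Set Topology

section SturmLiouville

variable {a b c : ℝ} {f w ρ v v' : ℝ → ℝ}

theorem exists_lipschitzOnWith_Icc_of_hasDerivAt (hv : ∀ x ∈ Icc a b, HasDerivAt v (v' x) x)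
    (hv' : ContinuousOn v' (Icc a b)) : ∃ C, LipschitzOnWith C v (Icc a b) := by
  obtain ⟨C, hC⟩ := isCompact_Icc.exists_bound_of_continuousOn hv'
  exact ⟨C.toNNReal, (convex_Icc a b).lipschitzOnWith_of_nnnorm_hasDerivWithin_le
    (fun x hx => (hv x hx).hasDerivWithinAt) fun x hx => NNReal.le_toNNReal_of_coe_le (hC x hx)⟩

theorem tendsto_integral_mul_div_add {g : ℝ → ℝ} (hab : a ≤ b) (hvc : ContinuousOn v (Icc a b))
    (hv0 : ∀ x ∈ Icc a b, 0 ≤ v x) (hvne : ∀ x ∈ Ioo a b, v x ≠ 0)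
    (hg : IntervalIntegrable g volume a b) :
    Tendsto (fun ε => ∫ x in a..b, g x * (v x / (v x + ε))) (𝓝[>] 0) (𝓝 (∫ x in a..b, g x)) := by
  refine intervalIntegral.tendsto_integral_filter_of_dominated_convergence
    (fun x => |g x|) ?_ ?_ hg.abs ?_
  · filter_upwards [self_mem_nhdsWithin] with ε hε
    have hquot : ContinuousOn (fun x => v x / (v x + ε)) (Icc a b) :=
      hvc.div (hvc.add continuousOn_const) fun x hx => (add_pos_of_nonneg_of_pos (hv0 x hx) hε).ne'
    rw [uIoc_of_le hab]
    exact hg.1.aestronglyMeasurable.mul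
      ((hquot.mono Ioc_subset_Icc_self).aestronglyMeasurable measurableSet_Ioc)
  · filter_upwards [self_mem_nhdsWithin] with ε hε
    refine ae_of_all _ fun x hx => ?_
    have hvx : 0 ≤ v x := hv0 x (uIcc_of_le hab ▸ uIoc_subset_uIcc hx)
    have hle : v x ≤ v x + ε := le_add_of_nonneg_right (le_of_lt hε)
    rw [Real.norm_eq_abs, abs_mul, abs_of_nonneg (div_nonneg hvx (hvx.trans hle))]
    exact mul_le_of_le_one_right (abs_nonneg _) (div_le_one_of_le₀ hle (hvx.trans hle))
  · filter_upwards [Measure.ae_ne volume b] with x hxb hx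
    rw [uIoc_of_le hab] at hx
    have hvx : v x ≠ 0 := hvne x ⟨hx.1, lt_of_le_of_ne hx.2 hxb⟩
    have hquot : Tendsto (fun ε => v x / (v x + ε)) (𝓝 0) (𝓝 (v x / (v x + 0))) :=
      tendsto_const_nhds.div (tendsto_const_nhds.add tendsto_id) (by rwa [add_zero])
    rw [add_zero, div_self hvx] at hquot
    simpa only [mul_one] using (hquot.mono_left nhdsWithin_le_nhds).const_mul (g x)

/-- `v` is a classical solution on `[a, b]`, up to the boundary, of the Sturm–Liouville equation
with weight `w` and right-hand side `ρ`: the flux `w v'` has derivative `-ρ`. The derivative `v'` is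
a parameter, so that the flux can be differentiated as a closed formula. -/
structure IsSturmLiouvilleSolution (w ρ v v' : ℝ → ℝ) (a b : ℝ) : Prop where
  hasDerivAt : ∀ x ∈ Icc a b, HasDerivAt v (v' x) x
  continuousOn_deriv : ContinuousOn v' (Icc a b)
  hasDerivAt_flux : ∀ x ∈ Icc a b, HasDerivAt (fun y => w y * v' y) (-ρ x) x
  continuousOn_rhs : ContinuousOn ρ (Icc a b)

namespace IsSturmLiouvilleSolution

theorem continuousOn (hv : IsSturmLiouvilleSolution w ρ v v' a b) : ContinuousOn v (Icc a b) :=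
  fun x hx => (hv.hasDerivAt x hx).continuousAt.continuousWithinAt

theorem continuousOn_flux (hv : IsSturmLiouvilleSolution w ρ v v' a b) :
    ContinuousOn (fun x => w x * v' x) (Icc a b) :=
  fun x hx => (hv.hasDerivAt_flux x hx).continuousAt.continuousWithinAt

theorem add_const (hv : IsSturmLiouvilleSolution w ρ v v' a b) (ε : ℝ) :
    IsSturmLiouvilleSolution w ρ (fun x => v x + ε) v' a b :=
  { hv with hasDerivAt := fun x hx => (hv.hasDerivAt x hx).add_const ε }

theorem integral_deriv_sq_mul_eq (hv : IsSturmLiouvilleSolution w ρ v v' a b) (hab : a ≤ b)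
    (ha : v a * (w a * v' a) = 0) (hb : v b * (w b * v' b) = 0) :
    ∫ x in a..b, v' x ^ 2 * w x = ∫ x in a..b, v x * ρ x := by
  have hparts := intervalIntegral.integral_mul_deriv_eq_deriv_mul
    (fun x hx => hv.hasDerivAt x (uIcc_of_le hab ▸ hx))
    (fun x hx => hv.hasDerivAt_flux x (uIcc_of_le hab ▸ hx))
    (hv.continuousOn_deriv.intervalIntegrable_of_Icc hab)
    (hv.continuousOn_rhs.neg.intervalIntegrable_of_Icc hab)
  rw [ha, hb, sub_self, zero_sub] at hparts
  simp only [mul_neg, intervalIntegral.integral_neg, neg_inj] at hparts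
  rw [hparts]
  exact intervalIntegral.integral_congr fun x _ => by ring

theorem hasDerivAt_flux_div (hv : IsSturmLiouvilleSolution w ρ v v' a b) {x : ℝ}
    (hx : x ∈ Icc a b) (hvx : v x ≠ 0) :
    HasDerivAt (fun y => w y * v' y / v y) (-(ρ x / v x + w x * (v' x / v x) ^ 2)) x := by
  refine ((hv.hasDerivAt_flux x hx).div (hv.hasDerivAt x hx) hvx).congr_deriv ?_
  field_simp
  ring

theorem absolutelyContinuousOnInterval_flux_div (hv : IsSturmLiouvilleSolution w ρ v v' a b)
    (hab : a ≤ b) (hv0 : ∀ x ∈ Icc a b, v x ≠ 0) :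
    AbsolutelyContinuousOnInterval (fun x => w x * v' x / v x) a b := by
  have hderiv : ContinuousOn (fun x => -(ρ x / v x + w x * (v' x / v x) ^ 2)) (Icc a b) := by
    refine ((hv.continuousOn_rhs.div hv.continuousOn hv0).add ((hv.continuousOn_flux.mul
      hv.continuousOn_deriv).div (hv.continuousOn.pow 2) fun x hx => pow_ne_zero 2 (hv0 x hx))
      ).neg.congr fun x _ => ?_
    simp only [Pi.neg_apply, Pi.add_apply, Pi.div_apply, Pi.mul_apply, Pi.pow_apply]
    ring
  obtain ⟨C, hC⟩ := exists_lipschitzOnWith_Icc_of_hasDerivAt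
    (fun x hx => hv.hasDerivAt_flux_div hx (hv0 x hx)) hderiv
  rw [← uIcc_of_le hab] at hC
  exact hC.absolutelyContinuousOnInterval

/- Completing the square: `f'² w - f² ρ / v` is `w (f' - (v' / v) f)²` plus the derivative of
`(w v' / v) f²`. -/
theorem picone_inequality (hv : IsSturmLiouvilleSolution w ρ v v' a b) (hab : a ≤ b)
    (hvpos : ∀ x ∈ Icc a b, 0 < v x) (hw : ∀ x ∈ Icc a b, 0 ≤ w x)
    (hf : AbsolutelyContinuousOnInterval f a b)
    (hf' : IntervalIntegrable (fun x => deriv f x ^ 2 * w x) volume a b)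
    (ha : f a * (w a * v' a) = 0) (hb : f b * (w b * v' b) = 0) :
    ∫ x in a..b, f x ^ 2 * (ρ x / v x) ≤ ∫ x in a..b, deriv f x ^ 2 * w x := by
  have hv0 : ∀ x ∈ Icc a b, v x ≠ 0 := fun x hx => (hvpos x hx).ne'
  have hfc : ContinuousOn f (Icc a b) := uIcc_of_le hab ▸ hf.continuousOn
  have hF := (hv.absolutelyContinuousOnInterval_flux_div hab hv0).fun_mul (hf.fun_mul hf)
  have hρ : IntervalIntegrable (fun x => f x ^ 2 * (ρ x / v x)) volume a b :=
    ((hfc.pow 2).mul (hv.continuousOn_rhs.div hv.continuousOn hv0)).intervalIntegrable_of_Icc hab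
  have hboundary : ∫ x in a..b, deriv (fun y => w y * v' y / v y * (f y * f y)) x = 0 := by
    rw [hF.integral_deriv_eq_sub]
    linear_combination f b / v b * hb - f a / v a * ha
  have hsquare : ∀ᵐ x, x ∈ Icc a b → f x ^ 2 * (ρ x / v x) +
      deriv (fun y => w y * v' y / v y * (f y * f y)) x ≤ deriv f x ^ 2 * w x := by
    filter_upwards [hf.ae_differentiableAt] with x hdiff hx
    have hfx := (hdiff (uIcc_of_le hab ▸ hx)).hasDerivAt
    have hFx : deriv (fun y => w y * v' y / v y * (f y * f y)) x = _ :=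
      ((hv.hasDerivAt_flux_div hx (hv0 x hx)).mul (hfx.mul hfx)).deriv
    rw [hFx, ← sub_nonneg]
    refine (mul_nonneg (hw x hx) (sq_nonneg (deriv f x - v' x / v x * f x))).trans_eq ?_
    simp only [Pi.mul_apply]
    ring
  have hle := intervalIntegral.integral_mono_ae_restrict hab (hρ.add hF.intervalIntegrable_deriv)
    hf' ((ae_restrict_iff' measurableSet_Icc).2 hsquare)
  rwa [intervalIntegral.integral_add hρ hF.intervalIntegrable_deriv, hboundary, add_zero] at hle

/- `v` may vanish at the endpoints, so `picone_inequality` is applied to `v + ε`, which has the same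
flux. -/
theorem mul_integral_sq_mul_le
    (hv : IsSturmLiouvilleSolution w (fun x => c * (v x * w x)) v v' a b) (hab : a < b)
    (hvpos : ∀ x ∈ Ioo a b, 0 < v x) (hwc : ContinuousOn w (Icc a b))
    (hw : ∀ x ∈ Icc a b, 0 ≤ w x) (hf : AbsolutelyContinuousOnInterval f a b)
    (hf' : IntervalIntegrable (fun x => deriv f x ^ 2 * w x) volume a b)
    (ha : f a * (w a * v' a) = 0) (hb : f b * (w b * v' b) = 0) :
    c * ∫ x in a..b, f x ^ 2 * w x ≤ ∫ x in a..b, deriv f x ^ 2 * w x := by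
  have hfc : ContinuousOn f (Icc a b) := uIcc_of_le hab.le ▸ hf.continuousOn
  have hv0 : ∀ x ∈ Icc a b, 0 ≤ v x := fun x hx =>
    le_on_closure (fun y hy => (hvpos y hy).le) continuousOn_const
      (by rw [closure_Ioo hab.ne]; exact hv.continuousOn) (by rwa [closure_Ioo hab.ne])
  have hpicone : ∀ ε > 0, c * ∫ x in a..b, f x ^ 2 * w x * (v x / (v x + ε)) ≤
      ∫ x in a..b, deriv f x ^ 2 * w x := fun ε hε => by
    refine le_trans (le_of_eq ?_) ((hv.add_const ε).picone_inequality hab.le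
      (fun x hx => add_pos_of_nonneg_of_pos (hv0 x hx) hε) hw hf hf' ha hb)
    rw [← intervalIntegral.integral_const_mul]
    exact intervalIntegral.integral_congr fun x _ => by ring
  have hlim := tendsto_integral_mul_div_add hab.le hv.continuousOn hv0
    (fun x hx => (hvpos x hx).ne') (((hfc.pow 2).mul hwc).intervalIntegrable_of_Icc hab.le)
  exact le_of_tendsto (hlim.const_mul c) (eventually_nhdsWithin_of_forall hpicone)

theorem integral_deriv_sq_mul_lt (hv : IsSturmLiouvilleSolution w ρ v v' a b) (hab : a < b)
    (hwc : ContinuousOn w (Icc a b)) (hρ : ∀ x ∈ Ioo a b, v x * ρ x < c * (v x ^ 2 * w x))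
    (ha : v a * (w a * v' a) = 0) (hb : v b * (w b * v' b) = 0) :
    ∫ x in a..b, v' x ^ 2 * w x < c * ∫ x in a..b, v x ^ 2 * w x := by
  have hl : IntervalIntegrable (fun x => v x * ρ x) volume a b :=
    (hv.continuousOn.mul hv.continuousOn_rhs).intervalIntegrable_of_Icc hab.le
  have hr : IntervalIntegrable (fun x => c * (v x ^ 2 * w x)) volume a b :=
    (((hv.continuousOn.pow 2).mul hwc).const_mul c).intervalIntegrable_of_Icc hab.le
  rw [hv.integral_deriv_sq_mul_eq hab.le ha hb, ← intervalIntegral.integral_const_mul, ← sub_pos,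
    ← intervalIntegral.integral_sub hr hl]
  exact intervalIntegral.intervalIntegral_pos_of_pos_on (hr.sub hl)
    (fun x hx => sub_pos.2 (hρ x hx)) hab

end IsSturmLiouvilleSolution

theorem integral_sq_mul_le_integral_sub_sq_mul (hab : a ≤ b) (hw : ∀ x ∈ Icc a b, 0 ≤ w x)
    (hwi : IntervalIntegrable w volume a b)
    (hfw : IntervalIntegrable (fun x => f x * w x) volume a b)
    (hf2w : IntervalIntegrable (fun x => f x ^ 2 * w x) volume a b)
    (hmean : ∫ x in a..b, f x * w x = 0) (m : ℝ) :
    ∫ x in a..b, f x ^ 2 * w x ≤ ∫ x in a..b, (f x - m) ^ 2 * w x :=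
  calc ∫ x in a..b, f x ^ 2 * w x
      ≤ (∫ x in a..b, f x ^ 2 * w x) + m ^ 2 * ∫ x in a..b, w x :=
        le_add_of_nonneg_right (mul_nonneg (sq_nonneg m) (intervalIntegral.integral_nonneg hab hw))
    _ = (∫ x in a..b, f x ^ 2 * w x) - 2 * m * (∫ x in a..b, f x * w x)
          + m ^ 2 * ∫ x in a..b, w x := by rw [hmean, mul_zero, sub_zero]
    _ = ∫ x in a..b, (f x - m) ^ 2 * w x := by
        rw [← intervalIntegral.integral_const_mul, ← intervalIntegral.integral_const_mul,
          ← intervalIntegral.integral_sub hf2w (hfw.const_mul _),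
          ← intervalIntegral.integral_add (hf2w.sub (hfw.const_mul _)) (hwi.const_mul _)]
        exact intervalIntegral.integral_congr fun x _ => by ring

end SturmLiouville

section SinWeight

variable {k n : ℝ} {f : ℝ → ℝ}

theorem hasDerivAt_sin_mul (k x : ℝ) :
    HasDerivAt (fun y => Real.sin (k * y)) (k * Real.cos (k * x)) x := by
  simpa only [mul_one, mul_comm] using ((hasDerivAt_id' x).const_mul k).sin

theorem hasDerivAt_cos_mul (k x : ℝ) :
    HasDerivAt (fun y => Real.cos (k * y)) (-(k * Real.sin (k * x))) x := by
  simpa only [mul_one, mul_comm, neg_mul, mul_neg] using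
    ((hasDerivAt_id' x).const_mul k).cos

/-- The weight `s_{k²}(x) ^ n`, where `s_{k²}(x) = sin (k x) / k`; on `[0, π / k]` it is the radial
volume density of the `(n + 1)`-dimensional sphere of curvature `k²`. -/
noncomputable def sinWeight (k n x : ℝ) : ℝ := (Real.sin (k * x) / k) ^ n

theorem continuous_sinWeight (hn : 0 ≤ n) : Continuous (sinWeight k n) :=
  Continuous.rpow_const (by fun_prop) fun _ => Or.inr hn

theorem sin_mul_pos (hk : 0 < k) {x : ℝ} (hx : x ∈ Ioo 0 (Real.pi / k)) : 0 < Real.sin (k * x) :=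
  Real.sin_pos_of_pos_of_lt_pi (mul_pos hk hx.1) ((lt_div_iff₀' hk).1 hx.2)

theorem sinWeight_pos (hk : 0 < k) {x : ℝ} (hx : x ∈ Ioo 0 (Real.pi / k)) : 0 < sinWeight k n x :=
  Real.rpow_pos_of_pos (div_pos (sin_mul_pos hk hx) hk) n

theorem sinWeight_nonneg (hk : 0 < k) {x : ℝ} (hx : x ∈ Icc 0 (Real.pi / k)) :
    0 ≤ sinWeight k n x :=
  Real.rpow_nonneg (div_nonneg (Real.sin_nonneg_of_nonneg_of_le_pi (mul_nonneg hk.le hx.1)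
    ((le_div_iff₀' hk).1 hx.2)) hk.le) n

theorem sinWeight_pi_div_sub (hk : k ≠ 0) (x : ℝ) :
    sinWeight k n (Real.pi / k - x) = sinWeight k n x := by
  rw [sinWeight, sinWeight, mul_sub, mul_div_cancel₀ _ hk, Real.sin_pi_sub]

theorem sinWeight_add_one (hn : 0 ≤ n) (x : ℝ) :
    sinWeight k (n + 1) x = sinWeight k n x * (Real.sin (k * x) / k) := by
  rcases eq_or_ne (Real.sin (k * x) / k) 0 with h | h
  · rw [sinWeight, h, Real.zero_rpow (by positivity), mul_zero]
  · exact Real.rpow_add_one h n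

theorem hasDerivAt_sinWeight_add_one (hk : k ≠ 0) (hn : 0 ≤ n) (x : ℝ) :
    HasDerivAt (sinWeight k (n + 1)) ((n + 1) * (Real.cos (k * x) * sinWeight k n x)) x := by
  have h := ((hasDerivAt_sin_mul k x).div_const k).rpow_const (p := n + 1)
    (Or.inr (le_add_of_nonneg_left hn))
  rw [add_sub_cancel_right, mul_div_cancel_left₀ _ hk] at h
  exact h.congr_deriv (by rw [sinWeight]; ring)

theorem isSturmLiouvilleSolution_cos_mul (hk : k ≠ 0) (hn : 0 ≤ n) (σ a b : ℝ) :
    IsSturmLiouvilleSolution (sinWeight k n)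
      (fun x => k ^ 2 * (n + 1) * (σ * Real.cos (k * x) * sinWeight k n x))
      (fun x => σ * Real.cos (k * x)) (fun x => -(σ * (k * Real.sin (k * x)))) a b where
  hasDerivAt x _ := ((hasDerivAt_cos_mul k x).const_mul σ).congr_deriv (mul_neg _ _)
  continuousOn_deriv := Continuous.continuousOn (by fun_prop)
  hasDerivAt_flux x _ := by
    have hflux : (fun y => sinWeight k n y * -(σ * (k * Real.sin (k * y)))) =
        fun y => -(σ * k ^ 2) * sinWeight k (n + 1) y := by
      funext y
      rw [sinWeight_add_one hn]
      field_simp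
    rw [hflux]
    exact ((hasDerivAt_sinWeight_add_one hk hn x).const_mul _).congr_deriv (by ring)
  continuousOn_rhs :=
    (continuous_const.mul ((by fun_prop : Continuous fun x => σ * Real.cos (k * x)).mul
      (continuous_sinWeight hn))).continuousOn

theorem mul_integral_sq_mul_sinWeight_le (hk : 0 < k) (hn : 0 ≤ n) {σ a b : ℝ} (hab : a < b)
    (ha0 : 0 ≤ a) (hb0 : b ≤ Real.pi / k) (hσ : ∀ x ∈ Ioo a b, 0 < σ * Real.cos (k * x))
    (hf : AbsolutelyContinuousOnInterval f a b)
    (hf' : IntervalIntegrable (fun x => deriv f x ^ 2 * sinWeight k n x) volume a b)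
    (ha : f a * Real.sin (k * a) = 0) (hb : f b * Real.sin (k * b) = 0) :
    k ^ 2 * (n + 1) * ∫ x in a..b, f x ^ 2 * sinWeight k n x ≤
      ∫ x in a..b, deriv f x ^ 2 * sinWeight k n x :=
  (isSturmLiouvilleSolution_cos_mul hk.ne' hn σ a b).mul_integral_sq_mul_le hab hσ
    (continuous_sinWeight hn).continuousOn
    (fun _ hx => sinWeight_nonneg hk (Icc_subset_Icc ha0 hb0 hx)) hf hf'
    (by linear_combination -(sinWeight k n a * σ * k) * ha)
    (by linear_combination -(sinWeight k n b * σ * k) * hb)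

theorem mul_integral_sq_mul_sinWeight_le_of_midpoint_eq_zero (hk : 0 < k) (hn : 0 ≤ n)
    (hf : AbsolutelyContinuousOnInterval f 0 (Real.pi / k))
    (hf' : IntervalIntegrable (fun x => deriv f x ^ 2 * sinWeight k n x) volume 0 (Real.pi / k))
    (hmid : f (Real.pi / k / 2) = 0) :
    k ^ 2 * (n + 1) * ∫ x in (0 : ℝ)..(Real.pi / k), f x ^ 2 * sinWeight k n x ≤
      ∫ x in (0 : ℝ)..(Real.pi / k), deriv f x ^ 2 * sinWeight k n x := by
  set D := Real.pi / k
  have hD0 : 0 < D := div_pos Real.pi_pos hk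
  have hkD : k * D = Real.pi := mul_div_cancel₀ _ hk.ne'
  have hmem : D / 2 ∈ uIcc 0 D := by rw [uIcc_of_le hD0.le]; constructor <;> linarith
  have hsub₁ : uIcc 0 (D / 2) ⊆ uIcc 0 D := uIcc_subset_uIcc left_mem_uIcc hmem
  have hsub₂ : uIcc (D / 2) D ⊆ uIcc 0 D := uIcc_subset_uIcc hmem right_mem_uIcc
  have hfw : ContinuousOn (fun x => f x ^ 2 * sinWeight k n x) (uIcc 0 D) :=
    (hf.continuousOn.pow 2).mul (continuous_sinWeight hn).continuousOn
  have hleft := mul_integral_sq_mul_sinWeight_le (σ := 1) hk hn (half_pos hD0) le_rfl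
    (half_le_self hD0.le)
    (fun x hx => by
      rw [one_mul]
      exact Real.cos_pos_of_mem_Ioo ⟨by nlinarith [hx.1, Real.pi_pos], by nlinarith [hx.2]⟩)
    (hf.mono hsub₁) (hf'.mono_set hsub₁) (by rw [mul_zero, Real.sin_zero, mul_zero])
    (by rw [hmid, zero_mul])
  have hright := mul_integral_sq_mul_sinWeight_le (σ := -1) hk hn (half_lt_self hD0)
    (half_pos hD0).le le_rfl
    (fun x hx => by
      rw [neg_one_mul, neg_pos]
      exact Real.cos_neg_of_pi_div_two_lt_of_lt (by nlinarith [hx.1]) (by nlinarith [hx.2]))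
    (hf.mono hsub₂) (hf'.mono_set hsub₂) (by rw [hmid, zero_mul])
    (by rw [hkD, Real.sin_pi, mul_zero])
  rw [← intervalIntegral.integral_add_adjacent_intervals (hfw.mono hsub₁).intervalIntegrable
      (hfw.mono hsub₂).intervalIntegrable,
    ← intervalIntegral.integral_add_adjacent_intervals (hf'.mono_set hsub₁) (hf'.mono_set hsub₂),
    mul_add]
  exact add_le_add hleft hright

theorem mul_integral_sq_mul_sinWeight_le_of_integral_eq_zero (hk : 0 < k) (hn : 0 ≤ n)
    (hf : AbsolutelyContinuousOnInterval f 0 (Real.pi / k))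
    (hf' : IntervalIntegrable (fun x => deriv f x ^ 2 * sinWeight k n x) volume 0 (Real.pi / k))
    (hmean : ∫ x in (0 : ℝ)..(Real.pi / k), f x * sinWeight k n x = 0) :
    k ^ 2 * (n + 1) * ∫ x in (0 : ℝ)..(Real.pi / k), f x ^ 2 * sinWeight k n x ≤
      ∫ x in (0 : ℝ)..(Real.pi / k), deriv f x ^ 2 * sinWeight k n x := by
  have hw : Continuous (sinWeight k n) := continuous_sinWeight hn
  set m := f (Real.pi / k / 2)
  have hac : AbsolutelyContinuousOnInterval (fun x => f x - m) 0 (Real.pi / k) :=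
    hf.sub (LipschitzWith.const m).lipschitzOnWith.absolutelyContinuousOnInterval
  have hderiv : deriv (fun x => f x - m) = deriv f := by funext x; exact deriv_sub_const m
  have hmid := mul_integral_sq_mul_sinWeight_le_of_midpoint_eq_zero hk hn hac
    (by rwa [hderiv]) (sub_self _)
  rw [hderiv] at hmid
  refine (mul_le_mul_of_nonneg_left ?_ (by positivity)).trans hmid
  exact integral_sq_mul_le_integral_sub_sq_mul (by positivity)
    (fun x hx => sinWeight_nonneg hk hx) (hw.intervalIntegrable _ _)
    (hf.continuousOn.mul hw.continuousOn).intervalIntegrable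
    ((hf.continuousOn.pow 2).mul hw.continuousOn).intervalIntegrable hmean m

end SinWeight

section MixedEigenfunction

variable {k n x : ℝ}

/-- The first eigenfunction `-cos (2 k x) / sin (k x)` of the mixed problem on `[π / 4k, π / 2k]`,
Dirichlet on the left and Neumann on the right, for the weight `sin (k x) ^ 2`, written in a form
that is easy to differentiate. -/
noncomputable def mixedEigenfunction (k x : ℝ) : ℝ := 2 * Real.sin (k * x) - (Real.sin (k * x))⁻¹

/-- The derivative of `mixedEigenfunction k` wherever `sin (k x) ≠ 0`. -/
noncomputable def mixedEigenfunctionDeriv (k x : ℝ) : ℝ :=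
  k * Real.cos (k * x) * (2 + (Real.sin (k * x))⁻¹ ^ 2)

theorem hasDerivAt_inv_sin_mul (hx : Real.sin (k * x) ≠ 0) :
    HasDerivAt (fun y => (Real.sin (k * y))⁻¹)
      (-(k * Real.cos (k * x) * (Real.sin (k * x))⁻¹ ^ 2)) x :=
  ((hasDerivAt_sin_mul k x).inv hx).congr_deriv (by rw [inv_pow, neg_div, div_eq_mul_inv])

theorem hasDerivAt_mixedEigenfunction (hx : Real.sin (k * x) ≠ 0) :
    HasDerivAt (mixedEigenfunction k) (mixedEigenfunctionDeriv k x) x :=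
  (((hasDerivAt_sin_mul k x).const_mul 2).sub (hasDerivAt_inv_sin_mul hx)).congr_deriv
    (by rw [mixedEigenfunctionDeriv]; ring)

theorem hasDerivAt_mixedEigenfunctionDeriv (hx : Real.sin (k * x) ≠ 0) :
    HasDerivAt (mixedEigenfunctionDeriv k)
      (-(k ^ 2 * Real.sin (k * x) * (2 + (Real.sin (k * x))⁻¹ ^ 2)
        + 2 * k ^ 2 * Real.cos (k * x) ^ 2 * (Real.sin (k * x))⁻¹ ^ 3)) x :=
  (((hasDerivAt_cos_mul k x).const_mul k).mul
    (((hasDerivAt_inv_sin_mul hx).pow 2).const_add 2)).congr_deriv 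
    (by simp only [Pi.pow_apply, Nat.cast_ofNat]; ring)

theorem hasDerivAt_sinWeight (hk : k ≠ 0) (hx : Real.sin (k * x) ≠ 0) :
    HasDerivAt (sinWeight k n) (n * (k * Real.cos (k * x) / Real.sin (k * x) * sinWeight k n x))
      x := by
  have hx' : Real.sin (k * x) / k ≠ 0 := div_ne_zero hx hk
  refine (((hasDerivAt_sin_mul k x).div_const k).rpow_const (p := n) (Or.inl hx')).congr_deriv ?_
  rw [Real.rpow_sub_one hx', sinWeight]
  field_simp

theorem isSturmLiouvilleSolution_mixedEigenfunction (hk : k ≠ 0) {a b : ℝ}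
    (hsin : ∀ x ∈ Icc a b, Real.sin (k * x) ≠ 0) :
    IsSturmLiouvilleSolution (sinWeight k n)
      (fun x => k ^ 2 * sinWeight k n x *
        ((n + 1) * mixedEigenfunction k x - (n - 2) * (Real.sin (k * x))⁻¹ ^ 3))
      (mixedEigenfunction k) (mixedEigenfunctionDeriv k) a b where
  hasDerivAt x hx := hasDerivAt_mixedEigenfunction (hsin x hx)
  continuousOn_deriv x hx :=
    (hasDerivAt_mixedEigenfunctionDeriv (hsin x hx)).continuousAt.continuousWithinAt
  hasDerivAt_flux x hx := by
    have hs := hsin x hx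
    refine ((hasDerivAt_sinWeight hk hs).mul
      (hasDerivAt_mixedEigenfunctionDeriv hs)).congr_deriv ?_
    rw [mixedEigenfunction, mixedEigenfunctionDeriv]
    field_simp
    rw [Real.cos_sq']
    ring
  continuousOn_rhs := by
    refine (continuousOn_const.mul fun x hx => ?_).mul ((continuousOn_const.mul fun x hx => ?_).sub
      (continuousOn_const.mul fun x hx => ?_))
    · exact (hasDerivAt_sinWeight hk (hsin x hx)).continuousAt.continuousWithinAt
    · exact (hasDerivAt_mixedEigenfunction (hsin x hx)).continuousAt.continuousWithinAt
    · exact ((hasDerivAt_inv_sin_mul (hsin x hx)).pow 3).continuousAt.continuousWithinAt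

theorem mixedEigenfunction_eq_neg_cos_div_sin (hx : Real.sin (k * x) ≠ 0) :
    mixedEigenfunction k x = -Real.cos (2 * (k * x)) / Real.sin (k * x) := by
  rw [mixedEigenfunction, Real.cos_two_mul, Real.cos_sq']
  field_simp
  ring

theorem mixedEigenfunction_pi_div_four (hk : k ≠ 0) :
    mixedEigenfunction k (Real.pi / k / 2 / 2) = 0 := by
  have harg : k * (Real.pi / k / 2 / 2) = Real.pi / 4 := by field_simp; norm_num
  rw [mixedEigenfunction_eq_neg_cos_div_sin (by rw [harg, Real.sin_pi_div_four]; positivity), harg,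
    show 2 * (Real.pi / 4) = Real.pi / 2 by ring, Real.cos_pi_div_two, neg_zero, zero_div]

theorem mixedEigenfunctionDeriv_pi_div_two (hk : k ≠ 0) :
    mixedEigenfunctionDeriv k (Real.pi / k / 2) = 0 := by
  rw [mixedEigenfunctionDeriv, show k * (Real.pi / k / 2) = Real.pi / 2 by field_simp,
    Real.cos_pi_div_two, mul_zero, zero_mul]

theorem mixedEigenfunction_pos (hk : 0 < k)
    (hx : x ∈ Ioo (Real.pi / k / 2 / 2) (Real.pi / k / 2)) : 0 < mixedEigenfunction k x := by
  have hkD : k * (Real.pi / k) = Real.pi := mul_div_cancel₀ _ hk.ne'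
  have hsin : 0 < Real.sin (k * x) :=
    Real.sin_pos_of_pos_of_lt_pi (by nlinarith [hx.1, Real.pi_pos])
      (by nlinarith [hx.2, Real.pi_pos])
  have hcos : Real.cos (2 * (k * x)) < 0 :=
    Real.cos_neg_of_pi_div_two_lt_of_lt (by nlinarith [hx.1]) (by nlinarith [hx.2, Real.pi_pos])
  rw [mixedEigenfunction_eq_neg_cos_div_sin hsin.ne']
  exact div_pos (neg_pos.2 hcos) hsin

theorem integral_mixedEigenfunctionDeriv_sq_lt (hk : 0 < k) (hn : 2 < n) :
    ∫ x in (Real.pi / k / 2 / 2)..(Real.pi / k / 2),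
        mixedEigenfunctionDeriv k x ^ 2 * sinWeight k n x <
      k ^ 2 * (n + 1) * ∫ x in (Real.pi / k / 2 / 2)..(Real.pi / k / 2),
        mixedEigenfunction k x ^ 2 * sinWeight k n x := by
  have hD : 0 < Real.pi / k := div_pos Real.pi_pos hk
  have hmem : ∀ x ∈ Icc (Real.pi / k / 2 / 2) (Real.pi / k / 2), x ∈ Ioo 0 (Real.pi / k) :=
    fun x hx => ⟨by linarith [hx.1], by linarith [hx.2]⟩
  refine (isSturmLiouvilleSolution_mixedEigenfunction hk.ne'
    fun x hx => (sin_mul_pos hk (hmem x hx)).ne').integral_deriv_sq_mul_lt (by linarith)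
    (continuous_sinWeight (by linarith)).continuousOn (fun x hx => ?_)
    (by rw [mixedEigenfunction_pi_div_four hk.ne', zero_mul])
    (by rw [mixedEigenfunctionDeriv_pi_div_two hk.ne', mul_zero, mul_zero])
  have hx' := hmem x (Ioo_subset_Icc_self hx)
  have hdefect : 0 < k ^ 2 * sinWeight k n x *
      ((n - 2) * (Real.sin (k * x))⁻¹ ^ 3) * mixedEigenfunction k x :=
    mul_pos (mul_pos (mul_pos (pow_pos hk 2) (sinWeight_pos hk hx'))
      (mul_pos (sub_pos.2 hn) (pow_pos (inv_pos.2 (sin_mul_pos hk hx')) 3)))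
      (mixedEigenfunction_pos hk hx)
  linear_combination hdefect

end MixedEigenfunction

section LocallyLipschitz

variable {f : ℝ → ℝ}

theorem locLipschitzOn_univ : LocLipschitzOn f univ ↔ LocallyLipschitz f := by
  refine ⟨fun hf x => ?_, fun hf x _ => ?_⟩
  · obtain ⟨ε, hε, C, hC⟩ := hf x (mem_univ x)
    exact ⟨C, Metric.ball x ε, Metric.ball_mem_nhds x hε, by rwa [univ_inter] at hC⟩
  · obtain ⟨C, t, ht, hC⟩ := hf x
    obtain ⟨ε, hε, hsub⟩ := Metric.mem_nhds_iff.1 ht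
    exact ⟨ε, hε, C, hC.mono (inter_subset_right.trans hsub)⟩

theorem slopeOn_univ_eq_abs_of_hasDerivAt {f' x : ℝ} (h : HasDerivAt f f' x) :
    slopeOn f univ x = |f'| := by
  have hslope : Tendsto (fun y => |f y - f x| / |y - x|) (𝓝[≠] x) (𝓝 |f'|) := by
    refine h.tendsto_slope.abs.congr fun y => ?_
    rw [slope_def_field, abs_div]
  rw [slopeOn, ← compl_eq_univ_sdiff]
  exact hslope.limsup_eq

namespace LocLipschitzOn

theorem exists_lipschitzOnWith_Icc (hf : LocLipschitzOn f univ) (a b : ℝ) :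
    ∃ C, LipschitzOnWith C f (Icc a b) :=
  (locLipschitzOn_univ.1 hf).locallyLipschitzOn.exists_lipschitzOnWith_of_compact isCompact_Icc

theorem absolutelyContinuousOnInterval (hf : LocLipschitzOn f univ) (a b : ℝ) :
    AbsolutelyContinuousOnInterval f a b :=
  (hf.exists_lipschitzOnWith_Icc _ _).choose_spec.absolutelyContinuousOnInterval

theorem continuous (hf : LocLipschitzOn f univ) : Continuous f :=
  (locLipschitzOn_univ.1 hf).continuous

theorem ae_differentiableAt (hf : LocLipschitzOn f univ) : ∀ᵐ x, DifferentiableAt ℝ f x := by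
  have h : ∀ n : ℕ, ∀ᵐ x, x ∈ uIcc (-(n : ℝ)) n → DifferentiableAt ℝ f x := fun n =>
    (hf.absolutelyContinuousOnInterval _ _).ae_differentiableAt
  filter_upwards [ae_all_iff.2 h] with x hx
  obtain ⟨n, hn⟩ := exists_nat_ge |x|
  refine hx n ?_
  rw [uIcc_of_le (by linarith [abs_nonneg x])]
  exact abs_le.1 hn

theorem slopeOn_univ_sq_ae_eq (hf : LocLipschitzOn f univ) :
    ∀ᵐ x, slopeOn f univ x ^ 2 = deriv f x ^ 2 := by
  filter_upwards [hf.ae_differentiableAt] with x hx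
  rw [slopeOn_univ_eq_abs_of_hasDerivAt hx.hasDerivAt, sq_abs]

theorem exists_abs_deriv_le (hf : LocLipschitzOn f univ) (a b : ℝ) :
    ∃ C, ∀ x ∈ Icc a b, |deriv f x| ≤ C := by
  obtain ⟨C, hC⟩ := hf.exists_lipschitzOnWith_Icc (a - 1) (b + 1)
  refine ⟨C, fun x hx => norm_deriv_le_of_lipschitzOn (Icc_mem_nhds ?_ ?_) hC⟩
  · linarith [hx.1]
  · linarith [hx.2]

theorem intervalIntegrable_deriv_sq (hf : LocLipschitzOn f univ) (a b : ℝ) :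
    IntervalIntegrable (fun x => deriv f x ^ 2) volume a b := by
  obtain ⟨C, hC⟩ := hf.exists_abs_deriv_le (min a b) (max a b)
  rw [intervalIntegrable_iff]
  refine Measure.integrableOn_of_bounded (M := C ^ 2) measure_Ioc_lt_top.ne
    ((measurable_deriv f).pow_const 2).aestronglyMeasurable ?_
  filter_upwards [ae_restrict_mem measurableSet_uIoc] with x hx
  rw [Real.norm_of_nonneg (sq_nonneg _)]
  exact sq_le_sq' (neg_le_of_abs_le (hC x (uIoc_subset_uIcc hx)))
    (le_of_abs_le (hC x (uIoc_subset_uIcc hx)))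

end LocLipschitzOn

end LocallyLipschitz

section PoincareConst

variable {h f : ℝ → ℝ} {I : Set ℝ} {r : ℝ}

/-- The functions over which the infimum defining the Poincaré constant of the density `h` on `I`
is taken. -/
structure IsTestFunction (h : ℝ → ℝ) (I : Set ℝ) (f : ℝ → ℝ) : Prop where
  locLipschitzOn : LocLipschitzOn f I
  integral_mul_eq_zero : ∫ x in I, f x * h x = 0
  integral_sq_mul_pos : 0 < ∫ x in I, f x ^ 2 * h x
  integrableOn : IntegrableOn (fun x => f x ^ 2 * h x) I

theorem IsTestFunction.poincareConst_lt (hf : IsTestFunction h I f) (hh : ∀ x, 0 ≤ h x)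
    (hr : ∫ x in I, slopeOn f I x ^ 2 * h x < r * ∫ x in I, f x ^ 2 * h x) :
    poincareConst h I < r := by
  refine lt_of_le_of_lt (csInf_le ⟨0, ?_⟩ ⟨f, hf.locLipschitzOn, hf.integral_mul_eq_zero,
    hf.integral_sq_mul_pos, hf.integrableOn, rfl⟩) ((div_lt_iff₀ hf.integral_sq_mul_pos).2 hr)
  rintro _ ⟨g, -, -, hpos, -, rfl⟩
  exact div_nonneg (integral_nonneg fun x => mul_nonneg (sq_nonneg _) (hh x)) hpos.le

theorem le_poincareConst (hne : ∃ f, IsTestFunction h I f)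
    (hr : ∀ f, IsTestFunction h I f →
      r * ∫ x in I, f x ^ 2 * h x ≤ ∫ x in I, slopeOn f I x ^ 2 * h x) :
    r ≤ poincareConst h I := by
  obtain ⟨f₀, hf₀⟩ := hne
  refine le_csInf ⟨_, f₀, hf₀.locLipschitzOn, hf₀.integral_mul_eq_zero, hf₀.integral_sq_mul_pos,
    hf₀.integrableOn, rfl⟩ ?_
  rintro _ ⟨f, hlip, hmean, hpos, hint, rfl⟩
  exact (le_div_iff₀ hpos).2 (hr f ⟨hlip, hmean, hpos, hint⟩)

end PoincareConst

section SymmetricDensity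

variable {D r : ℝ} {h φ g g' f : ℝ → ℝ}

theorem integral_eq_zero_of_antisymm (hφ : ∀ x, φ (D - x) = -φ x) :
    ∫ x in (0 : ℝ)..D, φ x = 0 := by
  have hreflect := intervalIntegral.integral_comp_sub_left (a := 0) (b := D) φ D
  simp only [hφ, intervalIntegral.integral_neg, sub_self, sub_zero] at hreflect
  linarith

theorem integral_eq_two_mul_of_symm (hD : 0 ≤ D) (hφi : IntervalIntegrable φ volume 0 D)
    (hφ : ∀ x, φ (D - x) = φ x) : ∫ x in (0 : ℝ)..D, φ x = 2 * ∫ x in (D / 2)..D, φ x := by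
  have hmid : D / 2 ∈ uIcc 0 D := by rw [uIcc_of_le hD]; constructor <;> linarith
  have hreflect := intervalIntegral.integral_comp_sub_left (a := 0) (b := D / 2) φ D
  simp only [hφ, sub_zero, sub_half] at hreflect
  rw [← intervalIntegral.integral_add_adjacent_intervals
    (hφi.mono_set (uIcc_subset_uIcc left_mem_uIcc hmid))
    (hφi.mono_set (uIcc_subset_uIcc hmid right_mem_uIcc)), hreflect, two_mul]

theorem deriv_sub_left_of_antisymm (hf : ∀ x, f (D - x) = -f x) (x : ℝ) :
    deriv f (D - x) = deriv f x := by
  have hreflect : deriv (fun y => f (D - y)) x = -deriv f (D - x) := deriv_comp_const_sub ..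
  rw [funext hf, deriv.fun_neg] at hreflect
  exact (neg_inj.1 hreflect).symm

theorem exists_antisymmetric_extension {C : NNReal} (hg : LipschitzOnWith C g (Icc (D / 2) D))
    (hmid : g (D / 2) = 0) :
    ∃ f, LocallyLipschitz f ∧ (∀ x, f (D - x) = -f x) ∧ EqOn f g (Icc (D / 2) D) := by
  obtain ⟨u, hu, hgu⟩ := hg.extend_real
  have hmax : ∀ {φ : ℝ → ℝ}, LocallyLipschitz φ → LocallyLipschitz fun x => u (max (φ x) (D / 2)) :=
    fun hφ => hu.locallyLipschitz.comp (hφ.max (LocallyLipschitz.const _))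
  refine ⟨fun x => u (max x (D / 2)) - u (max (D - x) (D / 2)),
    (hmax LocallyLipschitz.id).sub (hmax ((LocallyLipschitz.const D).sub LocallyLipschitz.id)),
    fun x => ?_, fun x hx => ?_⟩
  · dsimp only
    rw [sub_sub_cancel, neg_sub]
  · have hD : D / 2 ∈ Icc (D / 2) D := ⟨le_rfl, hx.1.trans hx.2⟩
    dsimp only
    rw [max_eq_left hx.1, max_eq_right (by linarith [hx.1]), ← hgu hx, ← hgu hD, hmid, sub_zero]

/-- A nonnegative density supported on `[0, D]`, continuous there and symmetric about the
midpoint `D / 2`. -/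
structure IsSymmetricDensity (h : ℝ → ℝ) (D : ℝ) : Prop where
  nonneg : ∀ x, 0 ≤ h x
  symm : ∀ x, h (D - x) = h x
  eq_zero_of_notMem : ∀ x ∉ Icc 0 D, h x = 0
  continuousOn : ContinuousOn h (Icc 0 D)

namespace IsSymmetricDensity

theorem integral_mul (hh : IsSymmetricDensity h D) (hD : 0 ≤ D) (φ : ℝ → ℝ) :
    ∫ x in univ, φ x * h x = ∫ x in (0 : ℝ)..D, φ x * h x := by
  rw [setIntegral_univ, intervalIntegral.integral_of_le hD, ← integral_Icc_eq_integral_Ioc]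
  exact (setIntegral_eq_integral_of_forall_compl_eq_zero fun x hx => by
    rw [hh.eq_zero_of_notMem x hx, mul_zero]).symm

theorem integrable_mul (hh : IsSymmetricDensity h D) (hφ : ContinuousOn φ (Icc 0 D)) :
    IntegrableOn (fun x => φ x * h x) univ := by
  rw [integrableOn_univ, ← integrableOn_iff_integrable_of_support_subset (s := Icc 0 D)]
  · exact (hφ.mul hh.continuousOn).integrableOn_Icc
  · exact fun x hx => by_contra fun hx' => hx
      (mul_eq_zero_of_right _ (hh.eq_zero_of_notMem x hx'))

theorem integral_slopeOn_sq_mul (hh : IsSymmetricDensity h D) (hD : 0 ≤ D)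
    (hf : LocLipschitzOn f univ) :
    ∫ x in univ, slopeOn f univ x ^ 2 * h x = ∫ x in (0 : ℝ)..D, deriv f x ^ 2 * h x := by
  rw [hh.integral_mul hD fun x => slopeOn f univ x ^ 2]
  refine intervalIntegral.integral_congr_ae ?_
  filter_upwards [hf.slopeOn_univ_sq_ae_eq] with x hx _
  rw [hx]

theorem intervalIntegrable_deriv_sq_mul (hh : IsSymmetricDensity h D) (hD : 0 ≤ D)
    (hf : LocLipschitzOn f univ) :
    IntervalIntegrable (fun x => deriv f x ^ 2 * h x) volume 0 D :=
  (hf.intervalIntegrable_deriv_sq 0 D).mul_continuousOn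
    (by rw [uIcc_of_le hD]; exact hh.continuousOn)

theorem exists_isTestFunction_of_half (hh : IsSymmetricDensity h D) (hD : 0 < D)
    (hg : ∀ x ∈ Icc (D / 2) D, HasDerivAt g (g' x) x) (hg' : ContinuousOn g' (Icc (D / 2) D))
    (hmid : g (D / 2) = 0) (hpos : 0 < ∫ x in (D / 2)..D, g x ^ 2 * h x) :
    ∃ f, IsTestFunction h univ f ∧
      ∫ x in univ, f x ^ 2 * h x = 2 * ∫ x in (D / 2)..D, g x ^ 2 * h x ∧
      ∫ x in univ, slopeOn f univ x ^ 2 * h x = 2 * ∫ x in (D / 2)..D, g' x ^ 2 * h x := by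
  obtain ⟨C, hC⟩ := exists_lipschitzOnWith_Icc_of_hasDerivAt hg hg'
  obtain ⟨f, hlip, hanti, hfg⟩ := exists_antisymmetric_extension hC hmid
  have hf := locLipschitzOn_univ.2 hlip
  have hderiv : ∀ x ∈ Ioo (D / 2) D, deriv f x = g' x := fun x hx =>
    (((hg x (Ioo_subset_Icc_self hx)).congr_of_eventuallyEq
      (hfg.eventuallyEq_of_mem (Icc_mem_nhds hx.1 hx.2))).deriv)
  have hsq : ∫ x in univ, f x ^ 2 * h x = 2 * ∫ x in (D / 2)..D, g x ^ 2 * h x := by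
    rw [hh.integral_mul hD.le (fun x => f x ^ 2), integral_eq_two_mul_of_symm
      (φ := fun x => f x ^ 2 * h x) hD.le
        ((hf.continuous.pow 2).continuousOn.mul hh.continuousOn |>.intervalIntegrable_of_Icc hD.le)
      fun x => by rw [hanti, hh.symm, neg_sq]]
    congr 1
    exact intervalIntegral.integral_congr_Ioo_of_le (half_le_self hD.le) fun x hx => by
      rw [hfg (Ioo_subset_Icc_self hx)]
  refine ⟨f, ⟨hf, ?_, hsq ▸ mul_pos two_pos hpos,
    hh.integrable_mul (hf.continuous.pow 2).continuousOn⟩, hsq, ?_⟩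
  · rw [hh.integral_mul hD.le]
    exact integral_eq_zero_of_antisymm fun x => by rw [hanti, hh.symm, neg_mul]
  · rw [hh.integral_slopeOn_sq_mul hD.le hf, integral_eq_two_mul_of_symm hD.le
      (hh.intervalIntegrable_deriv_sq_mul hD.le hf)
      fun x => by rw [deriv_sub_left_of_antisymm hanti, hh.symm]]
    congr 1
    exact intervalIntegral.integral_congr_Ioo_of_le (half_le_self hD.le) fun x hx => by
      rw [hderiv x hx]

theorem exists_isTestFunction (hh : IsSymmetricDensity h D) (hD : 0 < D)
    (hpos : ∀ x ∈ Ioo (D / 2) D, 0 < h x) : ∃ f, IsTestFunction h univ f := by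
  have hcont : ContinuousOn (fun x => (x - D / 2) ^ 2 * h x) (Icc (D / 2) D) :=
    Continuous.continuousOn (by fun_prop) |>.mul
      (hh.continuousOn.mono (Icc_subset_Icc_left (half_pos hD).le))
  obtain ⟨f, hf, -⟩ := hh.exists_isTestFunction_of_half (g := fun x => x - D / 2) hD
    (fun x _ => (hasDerivAt_id' x).sub_const _) continuousOn_const (sub_self _)
    (intervalIntegral.intervalIntegral_pos_of_pos_on
      (hcont.intervalIntegrable_of_Icc (half_le_self hD.le))
      (fun x hx => mul_pos (pow_pos (sub_pos.2 hx.1) 2) (hpos x hx)) (half_lt_self hD))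
  exact ⟨f, hf⟩

theorem poincareConst_lt (hh : IsSymmetricDensity h D) (hD : 0 < D)
    (hg : ∀ x ∈ Icc (D / 2) D, HasDerivAt g (g' x) x) (hg' : ContinuousOn g' (Icc (D / 2) D))
    (hmid : g (D / 2) = 0)
    (hr : ∫ x in (D / 2)..D, g' x ^ 2 * h x < r * ∫ x in (D / 2)..D, g x ^ 2 * h x) :
    poincareConst h univ < r := by
  have hnonneg : ∀ φ : ℝ → ℝ, 0 ≤ ∫ x in (D / 2)..D, φ x ^ 2 * h x := fun φ =>
    intervalIntegral.integral_nonneg (half_le_self hD.le) fun x _ =>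
      mul_nonneg (sq_nonneg _) (hh.nonneg x)
  have hpos : 0 < ∫ x in (D / 2)..D, g x ^ 2 * h x :=
    (hnonneg g).lt_of_ne fun h0 => (hnonneg g').not_gt (by rwa [← h0, mul_zero] at hr)
  obtain ⟨f, hf, hsq, hslope⟩ := hh.exists_isTestFunction_of_half hD hg hg' hmid hpos
  refine hf.poincareConst_lt hh.nonneg ?_
  rw [hsq, hslope]
  linarith

end IsSymmetricDensity

end SymmetricDensity

section ModelDensity

variable {K N D k x : ℝ}

theorem sKappa_sq (hk : 0 < k) (x : ℝ) : sKappa (k ^ 2) x = Real.sin (k * x) / k := by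
  rw [sKappa, if_pos (pow_pos hk 2), Real.sqrt_sq hk.le]

theorem modelDensity_of_mem_Icc (hk : 0 < k) (hκ : K / (N - 1) = k ^ 2) (hx : x ∈ Icc 0 D) :
    modelDensity K N D x = sinWeight k (N - 1) (max x (D - x)) := by
  simp only [modelDensity, hκ, sKappa_sq hk, sinWeight]
  rcases le_or_gt x (D / 2) with h | h
  · rw [if_pos ⟨hx.1, h⟩, max_eq_right (by linarith)]
  · rw [if_neg (fun h' => h.not_ge h'.2), if_pos ⟨h.le, hx.2⟩, max_eq_left (by linarith)]

theorem modelDensity_of_notMem_Icc (hx : x ∉ Icc 0 D) : modelDensity K N D x = 0 := by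
  rw [modelDensity, if_neg fun h => hx ⟨h.1, by linarith [h.1, h.2]⟩,
    if_neg fun h => hx ⟨by linarith [h.1, h.2], h.2⟩]

theorem modelDensity_of_mem_Icc_half (hk : 0 < k) (hκ : K / (N - 1) = k ^ 2)
    (hx : x ∈ Icc (D / 2) D) : modelDensity K N D x = sinWeight k (N - 1) x := by
  rw [modelDensity_of_mem_Icc hk hκ ⟨by linarith [hx.1, hx.2], hx.2⟩,
    max_eq_left (by linarith [hx.1])]

theorem modelDensity_pi_div (hk : 0 < k) (hκ : K / (N - 1) = k ^ 2)
    (hx : x ∈ Icc 0 (Real.pi / k)) :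
    modelDensity K N (Real.pi / k) x = sinWeight k (N - 1) x := by
  rw [modelDensity_of_mem_Icc hk hκ hx]
  rcases max_choice x (Real.pi / k - x) with h | h
  · rw [h]
  · rw [h, sinWeight_pi_div_sub hk.ne']

theorem isSymmetricDensity_modelDensity (hk : 0 < k) (hκ : K / (N - 1) = k ^ 2) (hN : 1 ≤ N)
    (hD : D ≤ Real.pi / k) : IsSymmetricDensity (modelDensity K N D) D where
  nonneg x := by
    by_cases hx : x ∈ Icc 0 D
    · rw [modelDensity_of_mem_Icc hk hκ hx]
      exact sinWeight_nonneg hk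
        ⟨hx.1.trans (le_max_left _ _), (max_le hx.2 (sub_le_self D hx.1)).trans hD⟩
    · rw [modelDensity_of_notMem_Icc hx]
  symm x := by
    by_cases hx : x ∈ Icc 0 D
    · rw [modelDensity_of_mem_Icc hk hκ hx, modelDensity_of_mem_Icc hk hκ
        ⟨sub_nonneg.2 hx.2, sub_le_self D hx.1⟩, sub_sub_cancel, max_comm]
    · rw [modelDensity_of_notMem_Icc hx, modelDensity_of_notMem_Icc fun h =>
        hx ⟨by linarith [h.2], sub_nonneg.1 h.1⟩]
  eq_zero_of_notMem _ := modelDensity_of_notMem_Icc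
  continuousOn := by
    have hcont : Continuous fun x => sinWeight k (N - 1) (max x (D - x)) :=
      (continuous_sinWeight (sub_nonneg.2 hN)).comp (by fun_prop)
    exact hcont.continuousOn.congr fun x hx => modelDensity_of_mem_Icc hk hκ hx

theorem poincareConst_modelDensity_half_lt (hk : 0 < k) (hκ : K / (N - 1) = k ^ 2) (hN : 3 < N) :
    poincareConst (modelDensity K N (Real.pi / k / 2)) univ < k ^ 2 * N := by
  have hD : 0 < Real.pi / k := div_pos Real.pi_pos hk
  have hsol := isSturmLiouvilleSolution_mixedEigenfunction (n := N - 1) hk.ne'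
    (a := Real.pi / k / 2 / 2) (b := Real.pi / k / 2) fun x hx =>
      (sin_mul_pos hk ⟨by linarith [hx.1], by linarith [hx.2]⟩).ne'
  have hweight : ∀ φ : ℝ → ℝ,
      ∫ x in (Real.pi / k / 2 / 2)..(Real.pi / k / 2),
        φ x * modelDensity K N (Real.pi / k / 2) x =
      ∫ x in (Real.pi / k / 2 / 2)..(Real.pi / k / 2), φ x * sinWeight k (N - 1) x := fun φ =>
    intervalIntegral.integral_congr fun x hx =>
      congrArg (φ x * ·) (modelDensity_of_mem_Icc_half hk hκ
        (uIcc_of_le (half_le_self (half_pos hD).le) ▸ hx))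
  have hlt := integral_mixedEigenfunctionDeriv_sq_lt hk (n := N - 1) (by linarith)
  rw [sub_add_cancel, ← hweight fun x => mixedEigenfunctionDeriv k x ^ 2,
    ← hweight fun x => mixedEigenfunction k x ^ 2] at hlt
  exact (isSymmetricDensity_modelDensity hk hκ (by linarith) (half_le_self hD.le)).poincareConst_lt
    (half_pos hD) hsol.hasDerivAt hsol.continuousOn_deriv (mixedEigenfunction_pi_div_four hk.ne')
    hlt

theorem le_poincareConst_modelDensity_pi_div (hk : 0 < k) (hκ : K / (N - 1) = k ^ 2)
    (hN : 1 ≤ N) : k ^ 2 * N ≤ poincareConst (modelDensity K N (Real.pi / k)) univ := by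
  have hD : 0 < Real.pi / k := div_pos Real.pi_pos hk
  have hh := isSymmetricDensity_modelDensity hk hκ hN le_rfl
  have hpos : ∀ x ∈ Ioo (Real.pi / k / 2) (Real.pi / k), 0 < modelDensity K N (Real.pi / k) x :=
    fun x hx => by
      rw [modelDensity_of_mem_Icc_half hk hκ (Ioo_subset_Icc_self hx)]
      exact sinWeight_pos hk (Ioo_subset_Ioo_left (half_pos hD).le hx)
  have hweight : ∀ φ : ℝ → ℝ,
      ∫ x in (0 : ℝ)..(Real.pi / k), φ x * modelDensity K N (Real.pi / k) x =
      ∫ x in (0 : ℝ)..(Real.pi / k), φ x * sinWeight k (N - 1) x := fun φ =>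
    intervalIntegral.integral_congr fun x hx =>
      congrArg (φ x * ·) (modelDensity_pi_div hk hκ (uIcc_of_le hD.le ▸ hx))
  refine le_poincareConst (hh.exists_isTestFunction hD hpos) fun f hf => ?_
  have hmean := hf.integral_mul_eq_zero
  rw [hh.integral_mul hD.le, hweight] at hmean
  have hle := mul_integral_sq_mul_sinWeight_le_of_integral_eq_zero hk (sub_nonneg.2 hN)
    (hf.locLipschitzOn.absolutelyContinuousOnInterval _ _)
    ((hf.locLipschitzOn.intervalIntegrable_deriv_sq _ _).mul_continuousOn
      (continuous_sinWeight (sub_nonneg.2 hN)).continuousOn) hmean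
  rwa [sub_add_cancel, ← hweight fun x => f x ^ 2, ← hweight fun x => deriv f x ^ 2,
    ← hh.integral_mul hD.le fun x => f x ^ 2,
    ← hh.integral_slopeOn_sq_mul hD.le hf.locLipschitzOn] at hle

end ModelDensity

theorem stmt_17_general (K N : ℝ) (hK : 0 < K) (hN : 3 < N) :
    poincareConst (modelDensity K N (Real.pi / Real.sqrt (K / (N - 1)) / 2)) Set.univ
        < poincareConst (modelDensity K N (Real.pi / Real.sqrt (K / (N - 1)))) Set.univ ∧
    ¬ AntitoneOn (fun D => poincareConst (modelDensity K N D) Set.univ)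
        (Set.Ioc 0 (Real.pi / Real.sqrt (K / (N - 1)))) := by
  have hκ : 0 < K / (N - 1) := div_pos hK (by linarith)
  have hk : 0 < √(K / (N - 1)) := Real.sqrt_pos.2 hκ
  have hD : 0 < Real.pi / √(K / (N - 1)) := div_pos Real.pi_pos hk
  have hlt := (poincareConst_modelDensity_half_lt hk (Real.sq_sqrt hκ.le).symm hN).trans_le
    (le_poincareConst_modelDensity_pi_div hk (Real.sq_sqrt hκ.le).symm (by linarith))
  refine ⟨hlt, fun hanti => hlt.not_ge ?_⟩
  exact hanti ⟨half_pos hD, half_le_self hD.le⟩ ⟨hD, le_rfl⟩ (half_le_self hD.le)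

/-- For `K > 0` and `N ≥ 13`, `λ[h_{K,N,D_{K,N}/2}] < λ[h_{K,N,D_{K,N}}]`; in particular
`D ↦ λ[h_{K,N,D}]` is not non-increasing on `(0, D_{K,N}]`. -/
theorem stmt_17 (K N : ℝ) (hK : 0 < K) (hN : 13 ≤ N) :
    poincareConst (modelDensity K N (Real.pi / Real.sqrt (K / (N - 1)) / 2)) Set.univ
        < poincareConst (modelDensity K N (Real.pi / Real.sqrt (K / (N - 1)))) Set.univ ∧
    ¬ AntitoneOn (fun D => poincareConst (modelDensity K N D) Set.univ)
        (Set.Ioc 0 (Real.pi / Real.sqrt (K / (N - 1)))) := by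
  exact stmt_17_general K N hK (by linarith)
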